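/- arXiv:2603.02405 — 8 statements merged into one kernel-verified Lean document; each statement's English description precedes it below -/
import Mathlib

section
/- Let S' be a loop-free and reward-free pGCL program and b : States → Bool a guard. Then for every expectation X, wp[while(b){reward(1); S'}](X) = ert[while(b){S'}](X); in particular, prepending a unit reward to the loop body makes wp compute the expected run-time (number of loop iterations) of the loop. -/
open ENNReal

/-- Program states: maps from variables to extended non-negative reals. -/
abbrev PState (V : Type) := V → ℝ≥0∞

/-- Expectations: maps from states to extended non-negative reals. -/
abbrev Expct (V : Type) := PState V → ℝ≥0∞

/-- Syntax of pGCL programs. -/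
inductive pGCL (V : Type) : Type 1
  | skip : pGCL V
  | assign : V → Expct V → pGCL V
  | reward : Expct V → pGCL V
  | seq : pGCL V → pGCL V → pGCL V
  | prob : (p : ℝ≥0∞) → p ≤ 1 → pGCL V → pGCL V → pGCL V
  | ifte : (PState V → Bool) → pGCL V → pGCL V → pGCL V
  | loop : (PState V → Bool) → pGCL V → pGCL V

variable {V : Type} [DecidableEq V]

/-- The weakest pre-expectation transformer, bundled as an order hom. -/
noncomputable def wpHom : pGCL V → (Expct V →o Expct V)
  | .skip => OrderHom.id
  | .assign x e => ⟨fun X σ => X (Function.update σ x (e σ)), fun _ _ h σ => h _⟩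
  | .reward e => ⟨fun X σ => e σ + X σ, fun _ _ h σ => add_le_add le_rfl (h σ)⟩
  | .seq S₁ S₂ => (wpHom S₁).comp (wpHom S₂)
  | .prob p _ S₁ S₂ =>
      ⟨fun X σ => p * wpHom S₁ X σ + (1 - p) * wpHom S₂ X σ, by
        intro X Y h σ
        exact add_le_add (mul_le_mul' le_rfl ((wpHom S₁).monotone h σ))
          (mul_le_mul' le_rfl ((wpHom S₂).monotone h σ))⟩
  | .ifte b S₁ S₂ =>
      ⟨fun X σ => if b σ then wpHom S₁ X σ else wpHom S₂ X σ, by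
        intro X Y h σ
        dsimp only
        split
        · exact (wpHom S₁).monotone h σ
        · exact (wpHom S₂).monotone h σ⟩
  | .loop b S =>
      ⟨fun X => OrderHom.lfp
        ⟨fun Y σ => if b σ then wpHom S Y σ else X σ, by
          intro Y₁ Y₂ h σ
          dsimp only
          split
          · exact (wpHom S).monotone h σ
          · exact le_rfl⟩, by
        intro X₁ X₂ h
        apply OrderHom.lfp_le
        have := OrderHom.map_lfp
          (⟨fun Y σ => if b σ then wpHom S Y σ else X₂ σ, by
            intro Y₁ Y₂ h σ
            dsimp only
            split
            · exact (wpHom S).monotone h σ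
            · exact le_rfl⟩ : Expct V →o Expct V)
        refine le_trans (fun σ => ?_) (le_of_eq this)
        have hle : ∀ a : ℝ≥0∞, (if b σ then a else X₁ σ) ≤ (if b σ then a else X₂ σ) := by
          intro a
          split
          · exact le_rfl
          · exact h σ
        exact hle _⟩

/-- The weakest pre-expectation `wp[S](X)`. -/
noncomputable def wp (S : pGCL V) (X : Expct V) : Expct V := wpHom S X

/-- An expression does not depend on variable `τ`. -/
def UnusedE (τ : V) (e : Expct V) : Prop := ∀ σ v, e (Function.update σ τ v) = e σ

/-- A Boolean guard does not depend on variable `τ`. -/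
def UnusedB (τ : V) (b : PState V → Bool) : Prop := ∀ σ v, b (Function.update σ τ v) = b σ

/-- Variable `τ` does not occur in the program `S`. -/
def NotOccurs (τ : V) : pGCL V → Prop
  | .skip => True
  | .assign x e => x ≠ τ ∧ UnusedE τ e
  | .reward e => UnusedE τ e
  | .seq S₁ S₂ => NotOccurs τ S₁ ∧ NotOccurs τ S₂
  | .prob _ _ S₁ S₂ => NotOccurs τ S₁ ∧ NotOccurs τ S₂
  | .ifte b S₁ S₂ => UnusedB τ b ∧ NotOccurs τ S₁ ∧ NotOccurs τ S₂
  | .loop b S => UnusedB τ b ∧ NotOccurs τ S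

/-- Auxiliary reward transformation `T'_f` with ghost variable `τ`:
replaces `reward(e)` by `reward(f(τ+e) − f(τ)); τ := τ + e`. -/
noncomputable def Taux (τ : V) (f : ℝ≥0∞ → ℝ≥0∞) : pGCL V → pGCL V
  | .reward e =>
      .seq (.reward fun σ => f (σ τ + e σ) - f (σ τ)) (.assign τ (fun σ => σ τ + e σ))
  | .seq S₁ S₂ => .seq (Taux τ f S₁) (Taux τ f S₂)
  | .prob p hp S₁ S₂ => .prob p hp (Taux τ f S₁) (Taux τ f S₂)
  | .ifte b S₁ S₂ => .ifte b (Taux τ f S₁) (Taux τ f S₂)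
  | .loop b S => .loop b (Taux τ f S)
  | .skip => .skip
  | .assign x e => .assign x e

/-- Full reward transformation `T_f(S) = τ := 0; reward(f(0)); T'_f(S)`. -/
noncomputable def Tfull (τ : V) (f : ℝ≥0∞ → ℝ≥0∞) (S : pGCL V) : pGCL V :=
  .seq (.assign τ (fun _ => 0)) (.seq (.reward fun _ => f 0) (Taux τ f S))

/-- A program contains no reward statement. -/
def RewardFree : pGCL V → Prop
  | .skip => True
  | .assign _ _ => True
  | .reward _ => False
  | .seq S₁ S₂ => RewardFree S₁ ∧ RewardFree S₂
  | .prob _ _ S₁ S₂ => RewardFree S₁ ∧ RewardFree S₂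
  | .ifte _ S₁ S₂ => RewardFree S₁ ∧ RewardFree S₂
  | .loop _ S => RewardFree S

/-- A program contains no while loop. -/
def LoopFree : pGCL V → Prop
  | .skip => True
  | .assign _ _ => True
  | .reward _ => True
  | .seq S₁ S₂ => LoopFree S₁ ∧ LoopFree S₂
  | .prob _ _ S₁ S₂ => LoopFree S₁ ∧ LoopFree S₂
  | .ifte _ S₁ S₂ => LoopFree S₁ ∧ LoopFree S₂
  | .loop _ _ => False

/-- The expected run-time transformer `ert`: same clauses as `wp`, except that
while loops count one unit of run-time per iteration. -/
noncomputable def ertHom : pGCL V → (Expct V →o Expct V)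
  | .skip => OrderHom.id
  | .assign x e => ⟨fun X σ => X (Function.update σ x (e σ)), fun _ _ h σ => h _⟩
  | .reward e => ⟨fun X σ => e σ + X σ, fun _ _ h σ => add_le_add le_rfl (h σ)⟩
  | .seq S₁ S₂ => (ertHom S₁).comp (ertHom S₂)
  | .prob p _ S₁ S₂ =>
      ⟨fun X σ => p * ertHom S₁ X σ + (1 - p) * ertHom S₂ X σ, by
        intro X Y h σ
        exact add_le_add (mul_le_mul' le_rfl ((ertHom S₁).monotone h σ))
          (mul_le_mul' le_rfl ((ertHom S₂).monotone h σ))⟩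
  | .ifte b S₁ S₂ =>
      ⟨fun X σ => if b σ then ertHom S₁ X σ else ertHom S₂ X σ, by
        intro X Y h σ
        dsimp only
        split
        · exact (ertHom S₁).monotone h σ
        · exact (ertHom S₂).monotone h σ⟩
  | .loop b S =>
      ⟨fun X => OrderHom.lfp
        ⟨fun Y σ => if b σ then 1 + ertHom S Y σ else X σ, by
          intro Y₁ Y₂ h σ
          dsimp only
          split
          · exact add_le_add le_rfl ((ertHom S).monotone h σ)
          · exact le_rfl⟩, by
        intro X₁ X₂ h
        apply OrderHom.lfp_le
        have := OrderHom.map_lfp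
          (⟨fun Y σ => if b σ then 1 + ertHom S Y σ else X₂ σ, by
            intro Y₁ Y₂ h σ
            dsimp only
            split
            · exact add_le_add le_rfl ((ertHom S).monotone h σ)
            · exact le_rfl⟩ : Expct V →o Expct V)
        refine le_trans (fun σ => ?_) (le_of_eq this)
        have hle : ∀ a : ℝ≥0∞, (if b σ then a else X₁ σ) ≤ (if b σ then a else X₂ σ) := by
          intro a
          split
          · exact le_rfl
          · exact h σ
        exact hle _⟩

/-- The expected run-time `ert[S](X)`. -/
noncomputable def ert (S : pGCL V) (X : Expct V) : Expct V := ertHom S X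

/-- The program `S` instrumented with a unit reward at the start of every iteration of every loop,
nested loops included, so that the reward it collects on top of that of `S` counts iterations. -/
def countIterations : pGCL V → pGCL V
  | .skip => .skip
  | .assign x e => .assign x e
  | .reward e => .reward e
  | .seq S₁ S₂ => .seq (countIterations S₁) (countIterations S₂)
  | .prob p hp S₁ S₂ => .prob p hp (countIterations S₁) (countIterations S₂)
  | .ifte b S₁ S₂ => .ifte b (countIterations S₁) (countIterations S₂)
  | .loop b S => .loop b (.seq (.reward fun _ => 1) (countIterations S))

theorem LoopFree.countIterations_eq_self {V : Type} {S : pGCL V} (hS : LoopFree S) :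
    countIterations S = S := by
  induction S with
  | skip | assign | reward => rfl
  | seq S₁ S₂ ih₁ ih₂ | prob p hp S₁ S₂ ih₁ ih₂ | ifte b S₁ S₂ ih₁ ih₂ =>
    simp only [countIterations, ih₁ hS.1, ih₂ hS.2]
  | loop => exact hS.elim

theorem wpHom_countIterations (S : pGCL V) : wpHom (countIterations S) = ertHom S := by
  induction S with
  | skip | assign | reward => rfl
  | seq S₁ S₂ ih₁ ih₂ | prob p hp S₁ S₂ ih₁ ih₂ | ifte b S₁ S₂ ih₁ ih₂ =>
    simp only [countIterations, wpHom, ertHom, ih₁, ih₂]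
  | loop b S ih =>
    -- Both loops are least fixed points of `Y ↦ [b] · (1 + ert[S](Y)) + [¬b] · X`.
    simp only [countIterations, wpHom, ertHom, ih]
    rfl

theorem wp_reward_loop_eq_ert_general (S : pGCL V) (X : Expct V) :
    wp (countIterations S) X = ert S X :=
  DFunLike.congr_fun (wpHom_countIterations S) X

/-- Incremental runtime collection: for loop-free and reward-free `S'`,
`wp[while(b){reward(1); S'}](X) = ert[while(b){S'}](X)`. -/
theorem wp_reward_loop_eq_ert (b : PState V → Bool) (S' : pGCL V)
    (hloopfree : LoopFree S') (hrewfree : RewardFree S') (X : Expct V) :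
    wp (.loop b (.seq (.reward fun _ => 1) S')) X = ert (.loop b S') X := by
  simpa only [countIterations, hloopfree.countIterations_eq_self] using
    wp_reward_loop_eq_ert_general (.loop b S') X
end

section
/- (Path correspondence for the Markov chain reward transformation.) Let M = (S, Prob, σ₁, rew) be a Markov chain and f : ℝ≥0∞ → ℝ≥0∞ monotone with f(0) = 0. For every n ∈ ℕ, the map ξₙ sending a path σ₁…σₙ of M to the sequence (σ₁,α₁)…(σₙ,αₙ), where αᵢ = Σ_{j<i} rew(σⱼ), is a well-defined bijection from Paths^{=n}(M) to Paths^{=n}(T_f(M)) such that: (1) path probabilities are preserved, Prob(σ₁…σₙ) = Prob'(ξₙ(σ₁…σₙ)); (2) the second components track the previous untransformed rewards, αᵢ = Σ_{j<i} rew(σⱼ) for all 1 ≤ i ≤ n; and (3) rewards are transformed, f(rew(σ₁…σₙ)) = rew'(ξₙ(σ₁…σₙ)). -/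
open ENNReal

/-- A Markov chain with rewards: a transition function into probability mass
functions, an initial state, and a reward function. -/
structure MC (S : Type*) where
  P : S → PMF S
  init : S
  rew : S → ℝ≥0∞

namespace MC

variable {S : Type*}

/-- `l` is a path of length `n` of the Markov chain `M`: it starts at the
initial state and all one-step transition probabilities are positive. -/
def IsPath (M : MC S) (n : ℕ) (l : List S) : Prop :=
  l.length = n ∧ l.head? = some M.init ∧ l.Chain' (fun s s' => 0 < M.P s s')

/-- The probability of a path: the product of its transition probabilities. -/
noncomputable def pathProb (M : MC S) : List S → ℝ≥0∞
  | [] => 1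
  | [_] => 1
  | s :: s' :: r => M.P s s' * M.pathProb (s' :: r)

/-- The cumulative reward of a path: the sum of its state rewards. -/
noncomputable def pathRew (M : MC S) (l : List S) : ℝ≥0∞ := (l.map M.rew).sum

/-- The expected `g`-transformed cumulative reward of `M`:
`E(g(Rew M)) = sup_n Σ_{π ∈ Paths^{=n}(M)} Prob(π) · g(Rew(π))`. -/
noncomputable def expRew (M : MC S) (g : ℝ≥0∞ → ℝ≥0∞) : ℝ≥0∞ :=
  ⨆ n : ℕ, ∑' l : {l : List S // M.IsPath n l}, M.pathProb l.1 * g (M.pathRew l.1)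

/-- The reward-transformed Markov chain `T_f(M)`: the state space is augmented
with the accumulated reward of the original chain, and the new rewards are the
incremental differences `f(α + rew(σ)) − f(α)`. -/
noncomputable def transform (M : MC S) (f : ℝ≥0∞ → ℝ≥0∞) : MC (S × ℝ≥0∞) where
  P := fun c => (M.P c.1).map (fun s' => (s', c.2 + M.rew c.1))
  init := (M.init, 0)
  rew := fun c => f (c.2 + M.rew c.1) - f c.2

end MC

/-- The path correspondence map `ξ`: it sends `σ₁…σₙ` to
`(σ₁,α₁)…(σₙ,αₙ)` where `αᵢ = Σ_{j<i} rew(σⱼ)`. -/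
noncomputable def xi {S : Type*} (rew : S → ℝ≥0∞) (l : List S) : List (S × ℝ≥0∞) :=
  l.zip (l.scanl (fun a s => a + rew s) 0)

/-!
A transition of `T_f(M)` adds the reward of the current state to the second component, so a path
of `T_f(M)` is determined by its first components: deleting the second ones inverts `ξ`. The
transformed rewards along a path are successive differences of `f` at the accumulated rewards, so
their sum telescopes.
-/

lemma pmf_map_apply_of_injective {α β : Type*} {g : α → β} (hg : Function.Injective g)
    (p : PMF α) (a : α) : p.map g (g a) = p a := by
  classical
  rw [PMF.map_apply, tsum_eq_single a fun b hb => if_neg (hg.ne hb.symm), if_pos rfl]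

section xiFrom

variable {S R : Type*}

/-- The correspondence map `ξ` started from an arbitrary accumulated reward `a` instead of `0`.
Tails of `ξ`-images have this form, so statements about it can be proved by induction along a
path. -/
def xiFrom [Add R] (rew : S → R) (a : R) (l : List S) : List (S × R) :=
  l.zip (l.scanl (fun a s => a + rew s) a)

@[simp]
lemma xiFrom_nil [Add R] (rew : S → R) (a : R) : xiFrom rew a [] = [] := rfl

@[simp]
lemma xiFrom_cons [Add R] (rew : S → R) (a : R) (s : S) (l : List S) :
    xiFrom rew a (s :: l) = (s, a) :: xiFrom rew (a + rew s) l := by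
  simp [xiFrom]

lemma xiFrom_zero (rew : S → ℝ≥0∞) : xiFrom rew 0 = xi rew := rfl

lemma map_fst_xiFrom [Add R] (rew : S → R) (a : R) (l : List S) :
    (xiFrom rew a l).map Prod.fst = l :=
  List.map_fst_zip (by simp)

lemma snd_getElem_xiFrom [AddMonoid R] (rew : S → R) (a : R) (l : List S) (i : ℕ)
    (h : i < (xiFrom rew a l).length) :
    (xiFrom rew a l)[i].2 = a + ((l.take i).map rew).sum := by
  simp [xiFrom, ← List.foldl_map, ← List.foldl_assoc, List.sum_eq_foldl]

end xiFrom

namespace MC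

variable {S : Type*} (M : MC S) (f : ℝ≥0∞ → ℝ≥0∞)

lemma transform_P_apply_add_rew (s s' : S) (a : ℝ≥0∞) :
    (M.transform f).P (s, a) (s', a + M.rew s) = M.P s s' :=
  pmf_map_apply_of_injective (Prod.mk_left_injective _) _ _

lemma transform_P_pos_iff {s s' : S} {a a' : ℝ≥0∞} :
    0 < (M.transform f).P (s, a) (s', a') ↔ 0 < M.P s s' ∧ a' = a + M.rew s := by
  constructor
  · intro h
    obtain ⟨t, -, ht⟩ := (PMF.mem_support_map_iff _ _ _).1 ((PMF.mem_support_iff _ _).2 h.ne')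
    obtain ⟨rfl, rfl⟩ := Prod.mk.inj ht
    exact ⟨by rwa [transform_P_apply_add_rew] at h, rfl⟩
  · rintro ⟨h, rfl⟩
    rwa [transform_P_apply_add_rew]

lemma isChain_transform_cons_iff (s : S) (a : ℝ≥0∞) (L : List (S × ℝ≥0∞)) :
    ((s, a) :: L).IsChain (fun c c' => 0 < (M.transform f).P c c') ↔
      (s :: L.map Prod.fst).IsChain (fun s s' => 0 < M.P s s') ∧
        xiFrom M.rew a (s :: L.map Prod.fst) = (s, a) :: L := by
  induction L generalizing s a with
  | nil => simp
  | cons c L ih =>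
    obtain ⟨t, b⟩ := c
    by_cases hb : b = a + M.rew s
    · subst hb
      simp [transform_P_pos_iff, ih, and_assoc]
    · simp [transform_P_pos_iff, hb, Ne.symm hb]

lemma isPath_iff {n : ℕ} {l : List S} :
    M.IsPath n l ↔
      l.length = n ∧ l.head? = some M.init ∧ l.IsChain (fun s s' => 0 < M.P s s') :=
  Iff.rfl

lemma isPath_transform_iff {n : ℕ} {L : List (S × ℝ≥0∞)} :
    (M.transform f).IsPath n L ↔ M.IsPath n (L.map Prod.fst) ∧ xi M.rew (L.map Prod.fst) = L := by
  rw [← xiFrom_zero]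
  match L with
  | [] => simp [isPath_iff]
  | (s, a) :: L =>
    have init_iff : (s, a) = (M.transform f).init ↔ s = M.init ∧ a = 0 := Prod.mk_inj
    simp only [isPath_iff, List.length_cons, List.head?_cons, Option.some.injEq, init_iff,
      isChain_transform_cons_iff, List.map_cons, List.length_map]
    by_cases ha : a = 0
    · subst ha
      simp only [and_true, and_assoc]
    · simp [ha, Ne.symm ha]

lemma bijOn_xi_isPath (n : ℕ) :
    Set.BijOn (xi M.rew) {l | M.IsPath n l} {L | (M.transform f).IsPath n L} := by
  have left_inv (l : List S) : (xi M.rew l).map Prod.fst = l := map_fst_xiFrom M.rew 0 l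
  refine Set.InvOn.bijOn (f' := List.map Prod.fst)
    ⟨fun l _ => left_inv l, fun L hL => ((M.isPath_transform_iff f).1 hL).2⟩
    (fun l hl => (M.isPath_transform_iff f).2 ?_)
    (fun L hL => ((M.isPath_transform_iff f).1 hL).1)
  rw [left_inv]
  exact ⟨hl, rfl⟩

lemma pathProb_transform_xiFrom (a : ℝ≥0∞) (l : List S) :
    (M.transform f).pathProb (xiFrom M.rew a l) = M.pathProb l := by
  induction l generalizing a with
  | nil => rfl
  | cons s l ih =>
    cases l with
    | nil => rfl
    | cons t l =>
      simp only [xiFrom_cons, pathProb, transform_P_apply_add_rew] at ih ⊢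
      rw [ih]

variable {f} in
lemma add_pathRew_transform_xiFrom (hf : Monotone f) (a : ℝ≥0∞) (l : List S) :
    f a + (M.transform f).pathRew (xiFrom M.rew a l) = f (a + M.pathRew l) := by
  induction l generalizing a with
  | nil => simp [pathRew]
  | cons s l ih =>
    let T := M.transform f
    calc f a + T.pathRew (xiFrom M.rew a (s :: l))
        = f a + (f (a + M.rew s) - f a) + T.pathRew (xiFrom M.rew (a + M.rew s) l) := by
          simp [T, pathRew, transform, add_assoc]
      _ = f (a + M.rew s) + T.pathRew (xiFrom M.rew (a + M.rew s) l) := by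
          rw [add_tsub_cancel_of_le (hf le_self_add)]
      _ = f (a + M.rew s + M.pathRew l) := ih _
      _ = f (a + M.pathRew (s :: l)) := by simp [pathRew, add_assoc]

end MC

theorem mc_path_correspondence_general {S : Type*} (M : MC S) (f : ℝ≥0∞ → ℝ≥0∞)
    (hf : Monotone f) (n : ℕ) :
    Set.BijOn (xi M.rew) {l | M.IsPath n l} {l | (M.transform f).IsPath n l} ∧
    ∀ l : List S,
      (M.pathProb l = (M.transform f).pathProb (xi M.rew l)) ∧
      (∀ i (h : i < (xi M.rew l).length),
        ((xi M.rew l).get ⟨i, h⟩).2 = ((l.take i).map M.rew).sum) ∧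
      (f (M.pathRew l) = f 0 + (M.transform f).pathRew (xi M.rew l)) := by
  rw [← xiFrom_zero]
  refine ⟨M.bijOn_xi_isPath f n, fun l => ⟨?_, fun i h => ?_, ?_⟩⟩
  · exact (M.pathProb_transform_xiFrom f 0 l).symm
  · simpa using snd_getElem_xiFrom M.rew 0 l i h
  · simpa using (M.add_pathRew_transform_xiFrom hf 0 l).symm

/-- Path correspondence for the Markov chain reward transformation:
for monotone `f` with `f(0) = 0`, the map `ξ` is a bijection from the length-`n`
paths of `M` onto the length-`n` paths of `T_f(M)` which (1) preserves path
probabilities, (2) tracks previous untransformed rewards in the second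
components, and (3) transforms cumulative path rewards by `f`. -/
theorem mc_path_correspondence {S : Type*} [Countable S] (M : MC S)
    (f : ℝ≥0∞ → ℝ≥0∞) (hf : Monotone f) (hf0 : f 0 = 0) (n : ℕ) :
    Set.BijOn (xi M.rew) {l | M.IsPath n l} {l | (M.transform f).IsPath n l} ∧
    ∀ l : List S, M.IsPath n l →
      (M.pathProb l = (M.transform f).pathProb (xi M.rew l)) ∧
      (∀ i (h : i < (xi M.rew l).length),
        ((xi M.rew l).get ⟨i, h⟩).2 = ((l.take i).map M.rew).sum) ∧
      (f (M.pathRew l) = (M.transform f).pathRew (xi M.rew l)) := by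
  obtain ⟨bij, corr⟩ := mc_path_correspondence_general M f hf n
  exact ⟨bij, fun l _ => by simpa only [hf0, zero_add] using corr l⟩
end

section
/- (Lifting the restriction f(0) = 0.) Let M = (S, Prob, σ₁, rew) be a Markov chain and f : ℝ≥0∞ → ℝ≥0∞ an arbitrary monotone function. Define g(x) = f(x) − f(0) (truncated subtraction), and let M'' be the Markov chain obtained from the transformed chain T_g(M) by adding a new initial state σ₀'' with reward f(0) that transitions with probability 1 to (σ₁, 0), all other transitions and rewards unchanged. Then E(Rew M'') = E(f(Rew M)). -/
/-!
Conditioning on the first transition turns path sums into a recursion on the current state and the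
reward `α` accumulated so far, each level of which is dominated by the next one when the
transformation is monotone. In `T_g(M)` the rewards telescope, so a state `(s, α)` carries the
accumulated reward `g α` wherever `M` in state `s` carries `α`. A new initial state of reward `r`
shifts the path length by one and starts the accumulation at `r`; with `r = f 0` this restores the
constant subtracted in `g x = f x - f 0`. The shift does not change the supremum over path lengths.
-/

open ENNReal

/-- The chain `M''`: the `g`-transformed chain for `g(x) = f(x) − f(0)`,
with a new initial state (represented by `none`) of reward `f(0)` that moves
with probability 1 to the old initial state `(σ₁, 0)`. -/
noncomputable def MC.liftInit {S : Type*} (M : MC S) (f : ℝ≥0∞ → ℝ≥0∞) :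
    MC (Option (S × ℝ≥0∞)) where
  P := fun c => match c with
    | none => PMF.pure (some ((M.transform (fun x => f x - f 0)).init))
    | some sa => ((M.transform (fun x => f x - f 0)).P sa).map some
  init := none
  rew := fun c => match c with
    | none => f 0
    | some sa => (M.transform (fun x => f x - f 0)).rew sa

theorem tsum_pmf_map_mul {σ τ : Type*} (p : PMF σ) (φ : σ → τ) (F : τ → ℝ≥0∞) :
    ∑' t, p.map φ t * F t = ∑' s, p s * F (φ s) := by
  classical
  simp only [PMF.map_apply, ← ENNReal.tsum_mul_right]
  rw [ENNReal.tsum_comm]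
  simp only [ite_mul, zero_mul, tsum_ite_eq]

namespace MC

variable {S : Type*}

/-- The expectation of `g` of the cumulative reward after `n` transitions of `M` from state `s`,
where the reward `α` was accumulated before entering `s`. The rewards of `s` and of the last state
reached both count, so that `n` transitions correspond to paths of length `n + 1`. -/
noncomputable def expRewFrom (M : MC S) (g : ℝ≥0∞ → ℝ≥0∞) : ℕ → S → ℝ≥0∞ → ℝ≥0∞
  | 0, s, α => g (α + M.rew s)
  | n + 1, s, α => ∑' s', M.P s s' * M.expRewFrom g n s' (α + M.rew s)

/-- The chain that enters `M` through a new initial state `none` of reward `r`, from which it moves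
to the initial state of `M` with probability 1. The old states are embedded by `some`. -/
noncomputable def prepend (M : MC S) (r : ℝ≥0∞) : MC (Option S) where
  P
    | none => PMF.pure (some M.init)
    | some s => (M.P s).map some
  init := none
  rew
    | none => r
    | some s => M.rew s

theorem pathRew_cons (M : MC S) (s : S) (l : List S) :
    M.pathRew (s :: l) = M.rew s + M.pathRew l := by
  simp only [pathRew, List.map_cons, List.sum_cons]

theorem isChain_of_pathProb_ne_zero (M : MC S) :
    ∀ l : List S, M.pathProb l ≠ 0 → l.IsChain (fun s s' => 0 < M.P s s')
  | [], _ => .nil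
  | [s], _ => .singleton s
  | s :: s' :: l, h => by
    rw [pathProb, mul_ne_zero_iff] at h
    exact .cons_cons (pos_iff_ne_zero.mpr h.1) (M.isChain_of_pathProb_ne_zero (s' :: l) h.2)

theorem tsum_pathProb_cons_ofFn (M : MC S) (g : ℝ≥0∞ → ℝ≥0∞) (n : ℕ) (s : S) (α : ℝ≥0∞) :
    ∑' v : Fin n → S,
      M.pathProb (s :: List.ofFn v) * g (α + M.pathRew (s :: List.ofFn v)) =
        M.expRewFrom g n s α := by
  induction n generalizing s α with
  | zero => simp [pathProb, pathRew, expRewFrom]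
  | succ n ih =>
    rw [← (Fin.consEquiv fun _ => S).tsum_eq, ENNReal.tsum_prod', expRewFrom]
    refine tsum_congr fun s' => ?_
    rw [← ih, ← ENNReal.tsum_mul_left]
    refine tsum_congr fun v => ?_
    have ofFn_consEquiv : List.ofFn (Fin.consEquiv (fun _ => S) (s', v)) = s' :: List.ofFn v :=
      List.ofFn_cons s' v
    simp only [ofFn_consEquiv, pathProb, M.pathRew_cons s, add_assoc, mul_assoc]

theorem isPath_succ_iff (M : MC S) (n : ℕ) (l : List S) :
    M.IsPath (n + 1) l ↔ (∃ v : Fin n → S, M.init :: List.ofFn v = l) ∧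
      l.IsChain (fun s s' => 0 < M.P s s') := by
  constructor
  · rintro ⟨hlength, hhead, hchain⟩
    obtain ⟨t, rfl⟩ := List.head?_eq_some_iff.mp hhead
    obtain rfl : t.length = n := Nat.succ.inj hlength
    exact ⟨⟨t.get, by rw [List.ofFn_get]⟩, hchain⟩
  · rintro ⟨⟨v, rfl⟩, hchain⟩
    exact ⟨by simp, rfl, hchain⟩

theorem tsum_isPath_zero (M : MC S) (F : List S → ℝ≥0∞) :
    ∑' l : {l : List S // M.IsPath 0 l}, F l = 0 := by
  have : IsEmpty {l : List S // M.IsPath 0 l} :=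
    ⟨fun ⟨l, hlength, hhead, _⟩ => by simp [List.length_eq_zero_iff.mp hlength] at hhead⟩
  exact tsum_empty

theorem tsum_isPath_succ (M : MC S) (g : ℝ≥0∞ → ℝ≥0∞) (n : ℕ) :
    ∑' l : {l : List S // M.IsPath (n + 1) l}, M.pathProb l * g (M.pathRew l) =
      M.expRewFrom g n M.init 0 := by
  let weight : List S → ℝ≥0∞ := fun l => M.pathProb l * g (M.pathRew l)
  let paths : Set (List S) := {l | M.IsPath (n + 1) l}
  let extend : (Fin n → S) → List S := fun v => M.init :: List.ofFn v
  have extend_injective : Function.Injective extend :=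
    List.cons_injective.comp List.ofFn_injective
  have support_subset : Function.support (paths.indicator weight) ⊆ Set.range extend :=
    Set.support_indicator_subset.trans fun l hl => ((M.isPath_succ_iff n l).mp hl).1
  have indicator_extend (v : Fin n → S) :
      paths.indicator weight (extend v) = weight (extend v) :=
    Set.indicator_apply_eq_self.mpr fun hv => by
      by_contra hweight
      exact hv <| (M.isPath_succ_iff n _).mpr
        ⟨⟨v, rfl⟩, M.isChain_of_pathProb_ne_zero _ (left_ne_zero_of_mul hweight)⟩
  calc ∑' l : paths, weight l
      = ∑' l, paths.indicator weight l := tsum_subtype paths weight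
    _ = ∑' v, paths.indicator weight (extend v) := (extend_injective.tsum_eq support_subset).symm
    _ = ∑' v, weight (extend v) := tsum_congr indicator_extend
    _ = M.expRewFrom g n M.init 0 := by
      simpa only [zero_add] using M.tsum_pathProb_cons_ofFn g n M.init 0

theorem expRew_eq_iSup_expRewFrom (M : MC S) (g : ℝ≥0∞ → ℝ≥0∞) :
    M.expRew g = ⨆ n, M.expRewFrom g n M.init 0 := by
  rw [expRew, ← sup_iSup_nat_succ, M.tsum_isPath_zero fun l => M.pathProb l * g (M.pathRew l)]
  simp only [tsum_isPath_succ, bot_sup_eq, ← bot_eq_zero]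

theorem monotone_expRewFrom (M : MC S) {g : ℝ≥0∞ → ℝ≥0∞} (hg : Monotone g) (s : S) (α : ℝ≥0∞) :
    Monotone fun n => M.expRewFrom g n s α := by
  refine monotone_nat_of_le_succ fun n => ?_
  induction n generalizing s α with
  | zero =>
    calc g (α + M.rew s)
        = ∑' s', M.P s s' * g (α + M.rew s) := by
          rw [ENNReal.tsum_mul_right, PMF.tsum_coe, one_mul]
      _ ≤ ∑' s', M.P s s' * g (α + M.rew s + M.rew s') :=
          ENNReal.tsum_le_tsum fun s' => mul_le_mul_right (hg le_self_add) _
  | succ n ih => exact ENNReal.tsum_le_tsum fun s' => mul_le_mul_right (ih s' _) _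

theorem expRewFrom_transform (M : MC S) {g : ℝ≥0∞ → ℝ≥0∞} (hg : Monotone g)
    (h : ℝ≥0∞ → ℝ≥0∞) (c : ℝ≥0∞) (n : ℕ) (s : S) (α : ℝ≥0∞) :
    (M.transform g).expRewFrom h n (s, α) (c + g α) =
      M.expRewFrom (fun x => h (c + g x)) n s α := by
  have telescope (s : S) (α : ℝ≥0∞) :
      c + g α + (M.transform g).rew (s, α) = c + g (α + M.rew s) := by
    rw [transform, add_assoc, add_tsub_cancel_of_le (hg le_self_add)]
  induction n generalizing s α with
  | zero => simp only [expRewFrom, telescope]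
  | succ n ih =>
    simp only [expRewFrom, telescope, ← ih]
    exact tsum_pmf_map_mul _ _ _

theorem expRewFrom_prepend_some (M : MC S) (r : ℝ≥0∞) (h : ℝ≥0∞ → ℝ≥0∞) (n : ℕ) (s : S)
    (α : ℝ≥0∞) : (M.prepend r).expRewFrom h n (some s) α = M.expRewFrom h n s α := by
  induction n generalizing s α with
  | zero => rfl
  | succ n ih =>
    simp only [expRewFrom, ← ih]
    exact tsum_pmf_map_mul _ _ _

theorem expRewFrom_prepend_none (M : MC S) (r : ℝ≥0∞) (h : ℝ≥0∞ → ℝ≥0∞) (n : ℕ) (α : ℝ≥0∞) :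
    (M.prepend r).expRewFrom h (n + 1) none α = M.expRewFrom h n M.init (α + r) := by
  classical
  simp only [expRewFrom, prepend, PMF.pure_apply, ite_mul, one_mul, zero_mul, tsum_ite_eq]
  exact M.expRewFrom_prepend_some r h n M.init (α + r)

theorem expRew_prepend (M : MC S) (r : ℝ≥0∞) {h : ℝ≥0∞ → ℝ≥0∞} (hh : Monotone h) :
    (M.prepend r).expRew h = ⨆ n, M.expRewFrom h n M.init r := by
  rw [expRew_eq_iSup_expRewFrom, ← (monotone_expRewFrom _ hh _ _).iSup_nat_add 1]
  simp only [show (M.prepend r).init = none from rfl, expRewFrom_prepend_none, zero_add]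

theorem liftInit_eq_prepend_transform (M : MC S) (f : ℝ≥0∞ → ℝ≥0∞) :
    M.liftInit f = (M.transform fun x => f x - f 0).prepend (f 0) := by
  rw [liftInit, prepend, mk.injEq]
  exact ⟨funext fun | none => rfl | some _ => rfl, rfl, funext fun | none => rfl | some _ => rfl⟩

end MC

theorem mc_transform_sound_lifted_general {S : Type*} (M : MC S)
    (f : ℝ≥0∞ → ℝ≥0∞) (hf : Monotone f) :
    (M.liftInit f).expRew id = M.expRew f := by
  let g : ℝ≥0∞ → ℝ≥0∞ := fun x => f x - f 0
  have hg : Monotone g := fun _ _ hxy => tsub_le_tsub_right (hf hxy) _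
  have g_zero : g 0 = 0 := tsub_self _
  have add_g (x : ℝ≥0∞) : f 0 + g x = f x := add_tsub_cancel_of_le (hf zero_le)
  calc (M.liftInit f).expRew id
      = ((M.transform g).prepend (f 0)).expRew id := by rw [MC.liftInit_eq_prepend_transform]
    _ = ⨆ n, (M.transform g).expRewFrom id n (M.init, 0) (f 0) :=
        MC.expRew_prepend _ _ monotone_id
    _ = ⨆ n, M.expRewFrom f n M.init 0 := iSup_congr fun n => by
        simpa only [g_zero, add_zero, id, add_g] using
          M.expRewFrom_transform hg id (f 0) n M.init 0
    _ = M.expRew f := (M.expRew_eq_iSup_expRewFrom f).symm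

/-- Lifting the restriction `f(0) = 0`: for an arbitrary
monotone `f`, the chain `M''` obtained from `T_{f−f(0)}(M)` by prepending an
initial state with reward `f(0)` satisfies `E(Rew M'') = E(f(Rew M))`. -/
theorem mc_transform_sound_lifted {S : Type*} [Countable S] (M : MC S)
    (f : ℝ≥0∞ → ℝ≥0∞) (hf : Monotone f) :
    (M.liftInit f).expRew id = M.expRew f :=
  mc_transform_sound_lifted_general M f hf
end

section
/- (Soundness of the multi-reward Markov chain transformation.) Fix n ≥ 1 and let M = (S, Prob, σ₁, rew) be a Markov chain with tuple-valued rewards rew : S → (ℝ≥0∞)ⁿ, and let f : (ℝ≥0∞)ⁿ → ℝ≥0∞ be monotone with respect to the componentwise order with f(0,…,0) = 0. Then E(f(Rew M)) = E(Rew' T_f(M)), where T_f(M) has state space S × (ℝ≥0∞)ⁿ, initial state (σ₁, (0,…,0)), transitions Prob'((σ,τ⃗))((σ',τ⃗')) = Prob(σ)(σ') if τ⃗' = τ⃗ + rew(σ) (componentwise) and 0 otherwise, and reward rew'((σ,τ⃗)) = f(τ⃗ + rew(σ)) − f(τ⃗) (truncated subtraction). -/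
open ENNReal

/-- A Markov chain with `n`-tuple-valued rewards. -/
structure MCn (S : Type*) (n : ℕ) where
  P : S → PMF S
  init : S
  rew : S → (Fin n → ℝ≥0∞)

namespace MCn

variable {S : Type*} {n : ℕ}

/-- `l` is a path of length `k` of the multi-reward chain `M`. -/
def IsPath (M : MCn S n) (k : ℕ) (l : List S) : Prop :=
  l.length = k ∧ l.head? = some M.init ∧ l.Chain' (fun s s' => 0 < M.P s s')

/-- The probability of a path. -/
noncomputable def pathProb (M : MCn S n) : List S → ℝ≥0∞
  | [] => 1
  | [_] => 1
  | s :: s' :: r => M.P s s' * M.pathProb (s' :: r)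

/-- The cumulative tuple-valued reward of a path (componentwise sum). -/
noncomputable def pathRew (M : MCn S n) (l : List S) : Fin n → ℝ≥0∞ :=
  (l.map M.rew).sum

/-- The expected `f`-transformed cumulative reward of the multi-reward chain:
`E(f(Rew M)) = sup_k Σ_{π ∈ Paths^{=k}(M)} Prob(π) · f(Rew(π))`. -/
noncomputable def expRew (M : MCn S n) (f : (Fin n → ℝ≥0∞) → ℝ≥0∞) : ℝ≥0∞ :=
  ⨆ k : ℕ, ∑' l : {l : List S // M.IsPath k l}, M.pathProb l.1 * f (M.pathRew l.1)

/-- The multi-reward transformation `T_f(M)`: a scalar-reward chain over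
`S × (ℝ≥0∞)ⁿ` tracking the accumulated tuple of rewards, whose rewards are
the incremental differences `f(τ⃗ + rew(σ)) − f(τ⃗)`. -/
noncomputable def transform (M : MCn S n) (f : (Fin n → ℝ≥0∞) → ℝ≥0∞) :
    MC (S × (Fin n → ℝ≥0∞)) where
  P := fun c => (M.P c.1).map (fun s' => (s', c.2 + M.rew c.1))
  init := (M.init, 0)
  rew := fun c => f (c.2 + M.rew c.1) - f c.2

end MCn

/-!
Since transitions of `T_f(M)` update the second component deterministically, a path of `T_f(M)` is
determined by its projection to `M`: recording the reward accumulated before each state is a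
length- and probability-preserving bijection from the paths of `M` to those of `T_f(M)`. Along the
image of a path `π` the rewards `f (τ + rew σ) - f τ` telescope to `f (Rew π)`. Monotonicity of `f`
ensures that the truncated subtractions lose nothing; infinite values are harmless because only
`(b - a) + a = b` for `a ≤ b` is used, which also holds in `ℝ≥0∞`.
-/

section PartialSums

variable {S A : Type*}

/-- The list `l` with each entry `s` paired with `a` plus the sum of `r` over the entries preceding
`s`. This is the lift of a path of a Markov chain to its reward-tracking transform; the entry's own
value `r s` is excluded because the transform adds it on leaving `s`. -/
def withPartialSums [Add A] (r : S → A) : A → List S → List (S × A)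
  | _, [] => []
  | a, s :: l => (s, a) :: withPartialSums r (a + r s) l

section Add

variable [Add A] (r : S → A)

theorem map_fst_withPartialSums (a : A) (l : List S) :
    (withPartialSums r a l).map Prod.fst = l := by
  induction l generalizing a with
  | nil => rfl
  | cons s l ih => simp [withPartialSums, ih]

theorem length_withPartialSums (a : A) (l : List S) :
    (withPartialSums r a l).length = l.length := by
  rw [← List.length_map Prod.fst, map_fst_withPartialSums]

theorem head?_withPartialSums (a : A) (l : List S) :
    (withPartialSums r a l).head? = l.head?.map (·, a) := by
  cases l <;> rfl

theorem isChain_withPartialSums_iff (R : S → S → Prop) (a : A) (l : List S) :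
    (withPartialSums r a l).IsChain (fun c c' => c'.2 = c.2 + r c.1 ∧ R c.1 c'.1) ↔
      l.IsChain R := by
  induction l generalizing a with
  | nil => simp [withPartialSums]
  | cons s l ih => simp [withPartialSums, List.isChain_cons, head?_withPartialSums, ih]

theorem withPartialSums_map_fst_of_isChain {a : A} {l : List (S × A)}
    (hhead : ∀ c ∈ l.head?, c.2 = a) (hl : l.IsChain (fun c c' => c'.2 = c.2 + r c.1)) :
    withPartialSums r a (l.map Prod.fst) = l := by
  induction l generalizing a with
  | nil => rfl
  | cons c l ih =>
    obtain rfl : c.2 = a := hhead c rfl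
    obtain ⟨hnext, htail⟩ := List.isChain_cons.mp hl
    simp only [List.map_cons, withPartialSums, ih hnext htail]

end Add

theorem sum_map_tsub_withPartialSums_add {B : Type*} [AddMonoid A] [Preorder A]
    [CanonicallyOrderedAdd A] [AddCommMonoid B] [PartialOrder B] [CanonicallyOrderedAdd B]
    [Sub B] [OrderedSub B] (r : S → A) {f : A → B} (hf : Monotone f) (a : A) (l : List S) :
    ((withPartialSums r a l).map (fun c => f (c.2 + r c.1) - f c.2)).sum + f a =
      f (a + (l.map r).sum) := by
  induction l generalizing a with
  | nil => simp [withPartialSums]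
  | cons s l ih =>
    simp only [withPartialSums, List.map_cons, List.sum_cons]
    rw [add_right_comm, tsub_add_cancel_of_le (hf le_self_add), add_comm, ih, add_assoc]

end PartialSums

namespace MCn

variable {S : Type*} {n : ℕ} (M : MCn S n) (f : (Fin n → ℝ≥0∞) → ℝ≥0∞)

open Classical in
theorem transform_P_apply (c c' : S × (Fin n → ℝ≥0∞)) :
    (M.transform f).P c c' = if c'.2 = c.2 + M.rew c.1 then M.P c.1 c'.1 else 0 := by
  simp only [transform, PMF.map_apply, Prod.ext_iff]
  split_ifs with h <;> simp [h]

theorem transform_P_pos_iff (c c' : S × (Fin n → ℝ≥0∞)) :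
    0 < (M.transform f).P c c' ↔ c'.2 = c.2 + M.rew c.1 ∧ 0 < M.P c.1 c'.1 := by
  classical
  rw [transform_P_apply]
  split_ifs with h <;> simp [h]

theorem pathProb_transform_withPartialSums (t : Fin n → ℝ≥0∞) (l : List S) :
    (M.transform f).pathProb (withPartialSums M.rew t l) = M.pathProb l := by
  induction l generalizing t with
  | nil => rfl
  | cons s l ih =>
    cases l with
    | nil => rfl
    | cons s' l =>
      have htail := ih (t + M.rew s)
      simp only [withPartialSums] at htail
      simp only [withPartialSums, MC.pathProb, pathProb, htail, transform_P_apply, if_true]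

variable {f} in
theorem pathRew_transform_withPartialSums (hf : Monotone f) (hf0 : f 0 = 0) (l : List S) :
    (M.transform f).pathRew (withPartialSums M.rew 0 l) = f (M.pathRew l) := by
  simpa [MC.pathRew, pathRew, transform, hf0] using
    sum_map_tsub_withPartialSums_add M.rew hf 0 l

theorem isChain_transform_withPartialSums_iff (t : Fin n → ℝ≥0∞) (l : List S) :
    (withPartialSums M.rew t l).IsChain (fun c c' => 0 < (M.transform f).P c c') ↔
      l.IsChain (fun s s' => 0 < M.P s s') := by
  simp only [transform_P_pos_iff]
  exact isChain_withPartialSums_iff M.rew (fun s s' => 0 < M.P s s') t l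

theorem isPath_transform_withPartialSums_iff (k : ℕ) (l : List S) :
    (M.transform f).IsPath k (withPartialSums M.rew 0 l) ↔ M.IsPath k l := by
  have hhead : (withPartialSums M.rew 0 l).head? = some (M.transform f).init ↔
      l.head? = some M.init := by
    simp [head?_withPartialSums, transform]
  unfold MC.IsPath IsPath
  rw [length_withPartialSums, hhead]
  exact and_congr_right' (and_congr_right' (M.isChain_transform_withPartialSums_iff f 0 l))

theorem withPartialSums_map_fst_of_isPath {k : ℕ} {l : List (S × (Fin n → ℝ≥0∞))}
    (hl : (M.transform f).IsPath k l) :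
    withPartialSums M.rew 0 (l.map Prod.fst) = l := by
  obtain ⟨-, hhead, hchain⟩ := hl
  apply withPartialSums_map_fst_of_isChain
  · simp [hhead, transform]
  · exact hchain.imp fun c c' h => ((M.transform_P_pos_iff f c c').mp h).1

theorem bijOn_withPartialSums_isPath (k : ℕ) :
    Set.BijOn (withPartialSums M.rew 0) {l | M.IsPath k l} {l | (M.transform f).IsPath k l} := by
  refine Set.InvOn.bijOn (f' := List.map Prod.fst)
    ⟨fun l _ => map_fst_withPartialSums M.rew 0 l,
      fun l hl => M.withPartialSums_map_fst_of_isPath f hl⟩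
    (fun l hl => (M.isPath_transform_withPartialSums_iff f k l).mpr hl) fun l hl => ?_
  rw [Set.mem_ofPred_eq, ← M.isPath_transform_withPartialSums_iff f,
    M.withPartialSums_map_fst_of_isPath f hl]
  exact hl

end MCn

theorem mcn_transform_sound_general {S : Type*} {n : ℕ} (M : MCn S n)
    (f : (Fin n → ℝ≥0∞) → ℝ≥0∞) (hf : Monotone f) (hf0 : f 0 = 0) :
    M.expRew f = (M.transform f).expRew id := by
  refine iSup_congr fun k => ?_
  let e := (M.bijOn_withPartialSums_isPath f k).equiv
  calc ∑' l : {l // M.IsPath k l}, M.pathProb l.1 * f (M.pathRew l.1)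
      = ∑' l : {l // M.IsPath k l},
          (M.transform f).pathProb (e l).1 * (M.transform f).pathRew (e l).1 :=
        tsum_congr fun l => congrArg₂ (· * ·)
          (M.pathProb_transform_withPartialSums f 0 l.1).symm
          (M.pathRew_transform_withPartialSums hf hf0 l.1).symm
    _ = ∑' l : {l // (M.transform f).IsPath k l},
          (M.transform f).pathProb l.1 * (M.transform f).pathRew l.1 :=
        e.tsum_eq fun l => (M.transform f).pathProb l.1 * (M.transform f).pathRew l.1

/-- Soundness of the multi-reward Markov chain transformation:
for `n ≥ 1` and `f : (ℝ≥0∞)ⁿ → ℝ≥0∞` monotone (componentwise order) with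
`f(0,…,0) = 0`, we have `E(f(Rew M)) = E(Rew' T_f(M))`. -/
theorem mcn_transform_sound {S : Type*} [Countable S] {n : ℕ} (hn : 1 ≤ n)
    (M : MCn S n) (f : (Fin n → ℝ≥0∞) → ℝ≥0∞) (hf : Monotone f) (hf0 : f 0 = 0) :
    M.expRew f = (M.transform f).expRew id :=
  mcn_transform_sound_general M f hf hf0
end

section
/- (Second-moment fixed point of the web-server loop.) The least function Y : ℝ≥0 → ℝ≥0∞ (with respect to the pointwise order) satisfying Y(τ) = (2·τ + 1) + (1/2)·Y(τ + 1) for all τ ∈ ℝ≥0 is Y(τ) = 4·τ + 6. -/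
open ENNReal

/-!
Unrolling `Y τ = g τ + c * Y (τ + 1)` shows that two solutions `Y ≥ 0` and `Z` satisfy
`Z τ ≤ Y τ + c ^ n * Z (τ + n)` for every `n`. If `c < 1` and `Z` grows affinely, the geometric
factor wins, so `Z ≤ Y` in the limit: an affine solution, found by comparing coefficients, is
the least one.
-/

open Filter Topology

section Comparison

variable {α R : Type*} [Semiring R] [PartialOrder R] [IsOrderedRing R]
  {s : α → α} {g Y Z : α → R} {c : R}

lemma le_add_pow_mul_iterate (hc : 0 ≤ c) (hY₀ : 0 ≤ Y) (hZ : ∀ x, Z x ≤ g x + c * Z (s x))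
    (hY : ∀ x, g x + c * Y (s x) ≤ Y x) (n : ℕ) (x : α) :
    Z x ≤ Y x + c ^ n * Z (s^[n] x) := by
  induction n generalizing x with
  | zero => simpa only [pow_zero, one_mul, Function.iterate_zero, id] using
      le_add_of_nonneg_left (hY₀ x)
  | succ n ih =>
    calc Z x ≤ g x + c * Z (s x) := hZ x
      _ ≤ g x + c * (Y (s x) + c ^ n * Z (s^[n] (s x))) := by gcongr; exact ih (s x)
      _ = g x + c * Y (s x) + c ^ (n + 1) * Z (s^[n + 1] x) := by
        rw [mul_add, ← mul_assoc, ← pow_succ', ← add_assoc, Function.iterate_succ_apply]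
      _ ≤ Y x + c ^ (n + 1) * Z (s^[n + 1] x) := by gcongr; exact hY x

lemma le_of_tendsto_pow_mul_iterate [TopologicalSpace R] [ContinuousAdd R] [ClosedIciTopology R]
    (hc : 0 ≤ c) (hY₀ : 0 ≤ Y) (hZ : ∀ x, Z x ≤ g x + c * Z (s x))
    (hY : ∀ x, g x + c * Y (s x) ≤ Y x)
    (hlim : ∀ x, Tendsto (fun n ↦ c ^ n * Z (s^[n] x)) atTop (𝓝 0)) : Z ≤ Y := by
  intro x
  have hbound : Tendsto (fun n ↦ Y x + c ^ n * Z (s^[n] x)) atTop (𝓝 (Y x)) := by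
    simpa only [add_zero] using (hlim x).const_add (Y x)
  exact ge_of_tendsto' hbound fun n ↦ le_add_pow_mul_iterate hc hY₀ hZ hY n x

end Comparison

lemma tendsto_natCast_mul_pow_of_lt_one {c : ℝ≥0∞} (hc : c < 1) :
    Tendsto (fun n : ℕ ↦ n * c ^ n) atTop (𝓝 0) := by
  lift c to NNReal using hc.ne_top
  have hreal : Tendsto (fun n : ℕ ↦ (n : ℝ) * (c : ℝ) ^ n) atTop (𝓝 0) :=
    tendsto_self_mul_const_pow_of_lt_one c.coe_nonneg (mod_cast hc)
  have hnnreal : Tendsto (fun n : ℕ ↦ (n : NNReal) * c ^ n) atTop (𝓝 0) :=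
    NNReal.tendsto_coe.1 <| by simpa using hreal
  simpa using ENNReal.tendsto_coe.2 hnnreal

lemma tendsto_pow_mul_affine_of_lt_one {c a b : ℝ≥0∞} (hc : c < 1) (ha : a ≠ ∞) (hb : b ≠ ∞) :
    Tendsto (fun n : ℕ ↦ c ^ n * (a * n + b)) atTop (𝓝 0) := by
  have hlinear : Tendsto (fun n : ℕ ↦ a * (n * c ^ n)) atTop (𝓝 0) := by
    simpa only [mul_zero] using
      ENNReal.Tendsto.const_mul (tendsto_natCast_mul_pow_of_lt_one hc) (.inr ha)
  have hconst : Tendsto (fun n : ℕ ↦ b * c ^ n) atTop (𝓝 0) := by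
    simpa only [mul_zero] using
      ENNReal.Tendsto.const_mul (ENNReal.tendsto_pow_atTop_nhds_zero_of_lt_one hc) (.inr hb)
  have hsum := hlinear.add hconst
  rw [add_zero] at hsum
  exact hsum.congr fun n ↦ by ring

lemma isLeast_affine_of_coeff_eq {a b c A B : ℝ≥0∞} (hc : c < 1) (hA : A ≠ ∞) (hB : B ≠ ∞)
    (hslope : A = a + c * A) (hconst : B = b + c * (A + B)) :
    IsLeast {Y : NNReal → ℝ≥0∞ | ∀ τ : NNReal, Y τ = (a * τ + b) + c * Y (τ + 1)}
      (fun τ : NNReal ↦ A * τ + B) := by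
  have hfix (τ : NNReal) :
      A * τ + B = (a * τ + b) + c * (A * ((τ + 1 : NNReal) : ℝ≥0∞) + B) := by
    calc A * τ + B = (a + c * A) * τ + (b + c * (A + B)) := by rw [← hslope, ← hconst]
      _ = (a * τ + b) + c * (A * ((τ + 1 : NNReal) : ℝ≥0∞) + B) := by push_cast; ring
  refine ⟨hfix, fun Y hY ↦ le_of_tendsto_pow_mul_iterate zero_le zero_le
    (fun τ ↦ (hfix τ).le) (fun τ ↦ (hY τ).ge) fun τ ↦ ?_⟩
  have htail := tendsto_pow_mul_affine_of_lt_one hc hA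
    (ENNReal.add_ne_top.2 ⟨ENNReal.mul_ne_top hA (ENNReal.coe_ne_top (r := τ)), hB⟩)
  refine htail.congr fun n ↦ ?_
  rw [add_right_iterate, nsmul_one]
  push_cast
  ring

/-- Second-moment fixed point of the web-server loop: the least
function `Y : ℝ≥0 → ℝ≥0∞` (pointwise order) satisfying
`Y(τ) = (2·τ + 1) + (1/2)·Y(τ + 1)` for all `τ` is `Y(τ) = 4·τ + 6`. -/
theorem webserver_second_moment_lfp :
    IsLeast {Y : NNReal → ℝ≥0∞ | ∀ τ : NNReal, Y τ = (2 * τ + 1) + (1/2) * Y (τ + 1)}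
      (fun τ : NNReal => 4 * τ + 6) := by
  have half_mul_two_mul (x : ℝ≥0∞) : 1 / 2 * (2 * x) = x := by
    rw [one_div, ENNReal.inv_mul_cancel_left' (by simp) (by simp)]
  have hslope : (4 : ℝ≥0∞) = 2 + 1 / 2 * 4 := by
    calc (4 : ℝ≥0∞) = 2 + 2 := by norm_num
      _ = 2 + 1 / 2 * (2 * 2) := by rw [half_mul_two_mul]
      _ = 2 + 1 / 2 * 4 := by norm_num
  have hconst : (6 : ℝ≥0∞) = 1 + 1 / 2 * (4 + 6) := by
    calc (6 : ℝ≥0∞) = 1 + 5 := by norm_num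
      _ = 1 + 1 / 2 * (2 * 5) := by rw [half_mul_two_mul]
      _ = 1 + 1 / 2 * (4 + 6) := by norm_num
  exact isLeast_affine_of_coeff_eq (by simp) (by simp) (by simp) hslope hconst
end

section
/- (Closed form for the Kleene iterates of the second-moment functional.) Let Φ be the monotone map on functions ℝ≥0 → ℝ≥0∞ defined by Φ(Y)(τ) = (2·τ + 1) + (1/2)·Y(τ + 1), and let Φⁿ(0) denote its n-fold iterate starting from the constant-zero function. Then for every n ≥ 1 and every τ ∈ ℝ≥0, Φⁿ(0)(τ) = 2^{1−n}·((2^{n+1} − 2)·τ + 3·(2ⁿ − 1) − 2·n); consequently sup_{n∈ℕ} Φⁿ(0)(τ) = 4·τ + 6. -/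
open ENNReal

/-! The map `Φ` is affine with fixed point `Z(τ) = 4τ + 6`, so the defect `Z - Φⁿ(0)` satisfies the
homogeneous recursion `R(τ) ↦ R(τ + 1) / 2`. Hence `Φⁿ(0)(τ) + 2⁻ⁿ Z(τ + n) = Z(τ)`. Solving this
for `Φⁿ(0)(τ)` gives the closed form; as `2⁻ⁿ Z(τ + n) → 0`, the supremum is `Z(τ)`. -/

open Filter Topology

theorem iterate_zero_add_pow_mul_eq_of_fixedPoint {α R : Type*} [Semiring R] {f : α → α}
    {g Z : α → R} {c : R} {Φ : (α → R) → (α → R)} (hΦ : ∀ Y x, Φ Y x = g x + c * Y (f x))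
    (hZ : Function.IsFixedPt Φ Z) (n : ℕ) (x : α) :
    Φ^[n] 0 x + c ^ n * Z (f^[n] x) = Z x := by
  induction n generalizing x with
  | zero => simp
  | succ n ih =>
    calc Φ^[n + 1] 0 x + c ^ (n + 1) * Z (f^[n + 1] x)
        = g x + c * (Φ^[n] 0 (f x) + c ^ n * Z (f^[n] (f x))) := by
          rw [Function.iterate_succ_apply', hΦ, Function.iterate_succ_apply, pow_succ', mul_assoc,
            mul_add, add_assoc]
      _ = Φ Z x := by rw [ih, hΦ]
      _ = Z x := by rw [hZ]

theorem iSup_eq_of_add_eq_of_tendsto_zero {ι : Type*} {l : Filter ι} [l.NeBot]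
    {u r : ι → ℝ≥0∞} {a : ℝ≥0∞} (hur : ∀ i, u i + r i = a) (hr : Tendsto r l (𝓝 0)) :
    ⨆ i, u i = a := by
  refine le_antisymm (iSup_le fun i ↦ le_self_add.trans_eq (hur i)) ?_
  have hlim : Tendsto (fun i ↦ (⨆ j, u j) + r i) l (𝓝 (⨆ j, u j)) := by
    simpa only [add_zero] using hr.const_add (⨆ j, u j)
  exact ge_of_tendsto' hlim fun i ↦ (hur i).ge.trans (by gcongr; exact le_iSup u i)

theorem tendsto_pow_mul_natCast_nhds_zero_of_lt_one {c : ℝ≥0∞} (hc : c < 1) :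
    Tendsto (fun n : ℕ ↦ c ^ n * n) atTop (𝓝 0) := by
  lift c to NNReal using hc.ne_top
  have hreal : Tendsto (fun n : ℕ ↦ (n : ℝ) * (c : ℝ) ^ n) atTop (𝓝 0) :=
    tendsto_self_mul_const_pow_of_lt_one c.coe_nonneg (by exact_mod_cast hc)
  have hnnreal : Tendsto (fun n : ℕ ↦ c ^ n * (n : NNReal)) atTop (𝓝 0) := by
    simpa only [← NNReal.tendsto_coe, NNReal.coe_mul, NNReal.coe_pow, NNReal.coe_natCast,
      NNReal.coe_zero, mul_comm] using hreal
  simpa only [ENNReal.coe_mul, ENNReal.coe_pow, ENNReal.coe_natCast, ENNReal.coe_zero] using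
    ENNReal.tendsto_coe.mpr hnnreal

theorem tendsto_pow_mul_affine_nhds_zero_of_lt_one {a b c : ℝ≥0∞} (ha : a ≠ ∞) (hb : b ≠ ∞)
    (hc : c < 1) : Tendsto (fun n : ℕ ↦ c ^ n * (a * n + b)) atTop (𝓝 0) := by
  have hlin : Tendsto (fun n : ℕ ↦ a * (c ^ n * n)) atTop (𝓝 0) := by
    simpa only [mul_zero] using
      ENNReal.Tendsto.const_mul (tendsto_pow_mul_natCast_nhds_zero_of_lt_one hc) (Or.inr ha)
  have hconst : Tendsto (fun n : ℕ ↦ b * c ^ n) atTop (𝓝 0) := by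
    simpa only [mul_zero] using
      ENNReal.Tendsto.const_mul (ENNReal.tendsto_pow_atTop_nhds_zero_of_lt_one hc) (Or.inr hb)
  have hsum := hlin.add hconst
  rw [add_zero] at hsum
  exact hsum.congr fun n ↦ by ring

-- Subtraction in `ℝ≥0∞` is truncated; adding `2 * τ + 2 * n + 3` undoes all three subtractions.
theorem closedForm_numerator_add (n : ℕ) (τ : ℝ≥0∞) :
    ((2 ^ (n + 1) - 2) * τ + 3 * (2 ^ n - 1) - 2 * n) + (2 * τ + 2 * n + 3) =
      2 ^ n * (2 * τ + 3) := by
  have hpow : (n : ℝ≥0∞) + 1 ≤ 2 ^ n := by exact_mod_cast Nat.lt_two_pow_self (n := n)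
  have hslope : (2 ^ (n + 1) - 2 : ℝ≥0∞) + 2 = 2 ^ (n + 1) :=
    tsub_add_cancel_of_le (le_self_pow₀ one_le_two n.succ_ne_zero)
  have hconst : (2 ^ n - 1 : ℝ≥0∞) + 1 = 2 ^ n := tsub_add_cancel_of_le (one_le_pow₀ one_le_two)
  have hn : (2 * n : ℝ≥0∞) ≤ (2 ^ (n + 1) - 2) * τ + 3 * (2 ^ n - 1) :=
    calc (2 * n : ℝ≥0∞) ≤ 3 * (2 ^ n - 1) := by
          gcongr
          · norm_num
          · exact ENNReal.le_sub_of_add_le_right one_ne_top hpow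
      _ ≤ _ := le_add_self
  calc _ = ((2 ^ (n + 1) - 2) * τ + 3 * (2 ^ n - 1) - 2 * n + 2 * n) + (2 * τ + 3) := by ring
    _ = ((2 ^ (n + 1) - 2) + 2) * τ + 3 * ((2 ^ n - 1) + 1) := by
        rw [tsub_add_cancel_of_le hn]; ring
    _ = 2 ^ n * (2 * τ + 3) := by rw [hslope, hconst]; ring

theorem two_zpow_one_sub_natCast (n : ℕ) :
    (2 : ℝ≥0∞) ^ ((1 : ℤ) - (n : ℤ)) = 2 * (1 / 2) ^ n := by
  rw [ENNReal.zpow_sub two_ne_zero ofNat_ne_top, zpow_one, zpow_natCast, one_div,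
    ENNReal.inv_pow]

theorem closedForm_add_defect (n : ℕ) (τ : ℝ≥0∞) :
    (2 : ℝ≥0∞) ^ ((1 : ℤ) - (n : ℤ)) *
        ((2 ^ (n + 1) - 2) * τ + 3 * (2 ^ n - 1) - 2 * n) +
      (1 / 2) ^ n * (4 * (τ + n) + 6) = 4 * τ + 6 := by
  have hcancel : (1 / 2 : ℝ≥0∞) ^ n * 2 ^ n = 1 := by
    rw [← mul_pow, one_div, ENNReal.inv_mul_cancel two_ne_zero ofNat_ne_top, one_pow]
  rw [two_zpow_one_sub_natCast]
  calc _ = 2 * (1 / 2) ^ n * (((2 ^ (n + 1) - 2) * τ + 3 * (2 ^ n - 1) - 2 * n) +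
          (2 * τ + 2 * n + 3)) := by ring
    _ = (1 / 2) ^ n * 2 ^ n * (4 * τ + 6) := by rw [closedForm_numerator_add]; ring
    _ = 4 * τ + 6 := by rw [hcancel, one_mul]

theorem secondMoment_isFixedPt {Φ : (NNReal → ℝ≥0∞) → (NNReal → ℝ≥0∞)}
    (hΦ : ∀ Y (τ : NNReal), Φ Y τ = (2 * τ + 1) + (1 / 2) * Y (τ + 1)) :
    Function.IsFixedPt Φ fun τ ↦ 4 * τ + 6 := by
  funext τ
  have hhalf : (1 / 2 : ℝ≥0∞) * 2 = 1 := ENNReal.div_mul_cancel two_ne_zero ofNat_ne_top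
  calc Φ (fun τ ↦ 4 * τ + 6) τ
      = (2 * τ + 1) + 1 / 2 * 2 * (2 * τ + 5) := by rw [hΦ]; push_cast; ring
    _ = 4 * τ + 6 := by rw [hhalf]; ring

theorem secondMoment_iterate_add_defect {Φ : (NNReal → ℝ≥0∞) → (NNReal → ℝ≥0∞)}
    (hΦ : ∀ Y (τ : NNReal), Φ Y τ = (2 * τ + 1) + (1 / 2) * Y (τ + 1))
    (n : ℕ) (τ : NNReal) :
    Φ^[n] 0 τ + (1 / 2) ^ n * (4 * (τ + n) + 6) = 4 * τ + 6 := by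
  simpa only [add_right_iterate, nsmul_one, ENNReal.coe_add, ENNReal.coe_natCast] using
    iterate_zero_add_pow_mul_eq_of_fixedPoint hΦ (secondMoment_isFixedPt hΦ) n τ

/-- Closed form for the Kleene iterates of the second-moment
functional `Φ(Y)(τ) = (2τ+1) + (1/2)·Y(τ+1)`: for `n ≥ 1`,
`Φⁿ(0)(τ) = 2^{1−n}·((2^{n+1} − 2)·τ + 3·(2ⁿ − 1) − 2·n)`, and consequently
`sup_n Φⁿ(0)(τ) = 4τ + 6`. -/
theorem webserver_second_moment_iterates
    (Φ : (NNReal → ℝ≥0∞) → (NNReal → ℝ≥0∞))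
    (hΦ : ∀ Y (τ : NNReal), Φ Y τ = (2 * τ + 1) + (1/2) * Y (τ + 1)) :
    (∀ n : ℕ, 1 ≤ n → ∀ τ : NNReal,
      Φ^[n] 0 τ = (2 : ℝ≥0∞) ^ ((1 : ℤ) - (n : ℤ)) *
        (((2 : ℝ≥0∞) ^ (n + 1) - 2) * τ + 3 * ((2 : ℝ≥0∞) ^ n - 1) - 2 * n)) ∧
    (∀ τ : NNReal, (⨆ n : ℕ, Φ^[n] 0 τ) = 4 * τ + 6) := by
  have hiterate := secondMoment_iterate_add_defect hΦ
  refine ⟨fun n _ τ ↦ ?_, fun τ ↦ ?_⟩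
  · have hdefect : (1 / 2 : ℝ≥0∞) ^ n * (4 * (τ + n) + 6) ≠ ∞ :=
      ne_top_of_le_ne_top (by finiteness) (le_add_self.trans_eq (hiterate n τ))
    exact (ENNReal.add_left_inj hdefect).mp
      ((hiterate n τ).trans (closedForm_add_defect n τ).symm)
  · have hdefect : Tendsto (fun n : ℕ ↦ (1 / 2 : ℝ≥0∞) ^ n * (4 * (τ + n) + 6)) atTop (𝓝 0) :=
      (tendsto_pow_mul_affine_nhds_zero_of_lt_one (a := 4) (b := 4 * τ + 6) (by finiteness)
        (by finiteness) (ENNReal.half_lt_self one_ne_zero one_ne_top)).congr fun n ↦ by ring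
    exact iSup_eq_of_add_eq_of_tendsto_zero (fun n ↦ hiterate n τ) hdefect
end

section
/- (Expected excess over a budget.) Let p ∈ (0,1) and N ∈ ℕ. The least function Y : ℕ → ℝ≥0∞ (with respect to the pointwise order) satisfying Y(n) = [n ≥ N] + (1 − p)·Y(n + 1) for all n ∈ ℕ is Y(n) = (1 − p)^{N ∸ n} / p, where [·] is the indicator (value 1 if the condition holds, else 0) and ∸ is truncated subtraction on ℕ; in particular Y(0) = (1 − p)^N / p. -/
open ENNReal

/-! Unrolling `Y x = f x + q * Y (T x)` along the orbit of `x` shows that its least solution is the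
total discounted reward `∑' k, q ^ k * f (T^[k] x)`: every solution dominates all partial sums.
When `T` is the successor and `f = [N ≤ ·]`, the first `N - n` terms vanish and the rest is a
geometric series. -/

section DiscountedReward

variable {α : Type*} (T : α → α) (f : α → ℝ≥0∞) (q : ℝ≥0∞)

/-- The total reward `f` collected along the `T`-orbit of `x`, the reward at time `k` being
discounted by `q ^ k`. Any `q : ℝ≥0∞` is allowed, so the value may be `∞`. -/
noncomputable def discountedReward (x : α) : ℝ≥0∞ :=
  ∑' k, q ^ k * f (T^[k] x)

theorem discountedReward_eq_add (x : α) :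
    discountedReward T f q x = f x + q * discountedReward T f q (T x) := by
  simp only [discountedReward, ← ENNReal.tsum_mul_left]
  rw [tsum_eq_zero_add' ENNReal.summable]
  simp only [pow_zero, one_mul, Function.iterate_zero, id_eq, pow_succ', mul_assoc,
    Function.iterate_succ_apply]

variable {T f q} {Y : α → ℝ≥0∞}

theorem sum_range_pow_mul_iterate_le (hY : ∀ x, f x + q * Y (T x) ≤ Y x) (m : ℕ) (x : α) :
    ∑ k ∈ Finset.range m, q ^ k * f (T^[k] x) ≤ Y x := by
  induction m generalizing x with
  | zero => simp
  | succ m ih =>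
    calc ∑ k ∈ Finset.range (m + 1), q ^ k * f (T^[k] x)
        = f x + q * ∑ k ∈ Finset.range m, q ^ k * f (T^[k] (T x)) := by
          simp [Finset.sum_range_succ', Finset.mul_sum, pow_succ', mul_assoc, add_comm]
      _ ≤ f x + q * Y (T x) := by gcongr; exact ih (T x)
      _ ≤ Y x := hY x

theorem discountedReward_le (hY : ∀ x, f x + q * Y (T x) ≤ Y x) (x : α) :
    discountedReward T f q x ≤ Y x := by
  rw [discountedReward, ENNReal.tsum_eq_iSup_nat]
  exact iSup_le fun m => sum_range_pow_mul_iterate_le hY m x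

variable (T f q)

theorem isLeast_discountedReward :
    IsLeast {Y : α → ℝ≥0∞ | ∀ x, Y x = f x + q * Y (T x)} (discountedReward T f q) :=
  ⟨discountedReward_eq_add T f q, fun _ hY => discountedReward_le fun x => (hY x).ge⟩

end DiscountedReward

theorem tsum_ite_le_pow (q : ℝ≥0∞) (m : ℕ) :
    ∑' k, (if m ≤ k then q ^ k else 0) = q ^ m * (1 - q)⁻¹ := by
  have support_subset :
      Function.support (fun k => if m ≤ k then q ^ k else 0) ⊆ Set.range (m + ·) := by
    intro k hk
    have hmk : m ≤ k := by by_contra h; simp [h] at hk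
    exact ⟨k - m, Nat.add_sub_of_le hmk⟩
  rw [← (add_right_injective m).tsum_eq support_subset]
  simp only [Nat.le_add_right, if_true, pow_add, ENNReal.tsum_mul_left, ENNReal.tsum_geometric]

theorem discountedReward_succ_ite_le (q : ℝ≥0∞) (N n : ℕ) :
    discountedReward (· + 1) (fun i => if N ≤ i then 1 else 0) q n = q ^ (N - n) * (1 - q)⁻¹ := by
  simp only [discountedReward, add_right_iterate, smul_eq_mul, mul_one, mul_ite, mul_zero,
    ← tsub_le_iff_left, tsum_ite_le_pow]

/-- Expected excess over a budget: for `p ∈ (0,1)` and `N ∈ ℕ`,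
the least function `Y : ℕ → ℝ≥0∞` (pointwise order) satisfying
`Y(n) = [n ≥ N] + (1 − p)·Y(n + 1)` is `Y(n) = (1 − p)^{N ∸ n} / p`. -/
theorem expected_excess_lfp (p : ℝ≥0∞) (hp0 : 0 < p) (hp1 : p < 1) (N : ℕ) :
    IsLeast {Y : ℕ → ℝ≥0∞ |
        ∀ n : ℕ, Y n = (if N ≤ n then 1 else 0) + (1 - p) * Y (n + 1)}
      (fun n : ℕ => (1 - p) ^ (N - n) / p) := by
  have closed_form : discountedReward (· + 1) (fun i => if N ≤ i then 1 else 0) (1 - p) =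
      fun n => (1 - p) ^ (N - n) / p := by
    funext n
    rw [discountedReward_succ_ite_le, ENNReal.sub_sub_cancel one_ne_top hp1.le, div_eq_mul_inv]
  rw [← closed_form]
  exact isLeast_discountedReward (· + 1) (fun i => if N ≤ i then 1 else 0) (1 - p)
end

section
/- (CDF of the web-server runtime.) Let N ∈ ℕ with N ≥ 1. The least function Y : ℕ → ℝ≥0∞ (with respect to the pointwise order) satisfying Y(n) = [n + 1 = N] + (1/2)·Y(n + 1) for all n ∈ ℕ is Y(n) = [n + 1 ≤ N]·(1/2)^{N − (n+1)}; in particular Y(0) = (1/2)^{N − 1}, the probability that the web-server loop's runtime is at least N. -/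
open ENNReal

/-!
Unrolling the recurrence `k` times shows that every solution dominates the discounted reward
`c ^ k * f (n + k)` collected `k` steps later. The reward `[n + 1 = N]` is collected only once,
and its single discounted term is already a solution.
-/

section DiscountedReward

variable {R : Type*} [Semiring R]

theorem ite_mul_pow_eq_ite_add_mul (c : R) (N n : ℕ) :
    (if n + 1 ≤ N then 1 else 0) * c ^ (N - (n + 1)) =
      (if n + 1 = N then 1 else 0) +
        c * ((if n + 1 + 1 ≤ N then 1 else 0) * c ^ (N - (n + 1 + 1))) := by
  rcases lt_trichotomy (n + 1) N with before | rfl | after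
  · have exponent : N - (n + 1) = N - (n + 1 + 1) + 1 := by lia
    rw [if_pos before.le, if_neg before.ne, if_pos (Nat.succ_le_of_lt before), exponent]
    simp [pow_succ']
  · simp
  · rw [if_neg after.not_ge, if_neg after.ne', if_neg (by lia)]
    simp

variable [Preorder R] [CanonicallyOrderedAdd R]

theorem pow_mul_le_of_add_mul_le {c : R} {f Y : ℕ → R}
    (hY : ∀ n, f n + c * Y (n + 1) ≤ Y n) (k n : ℕ) :
    c ^ k * f (n + k) ≤ Y n := by
  induction k generalizing n with
  | zero => simpa using le_self_add.trans (hY n)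
  | succ k ih =>
    calc c ^ (k + 1) * f (n + (k + 1))
        = c * (c ^ k * f (n + 1 + k)) := by rw [pow_succ', mul_assoc, add_right_comm, add_assoc]
      _ ≤ c * Y (n + 1) := by gcongr; exact ih (n + 1)
      _ ≤ f n + c * Y (n + 1) := le_add_self
      _ ≤ Y n := hY n

theorem ite_mul_pow_le_of_ite_add_mul_le {c : R} {Y : ℕ → R} {N : ℕ}
    (hY : ∀ n, (if n + 1 = N then 1 else 0) + c * Y (n + 1) ≤ Y n) (n : ℕ) :
    (if n + 1 ≤ N then 1 else 0) * c ^ (N - (n + 1)) ≤ Y n := by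
  split_ifs with h
  · have reward_reached : n + (N - (n + 1)) + 1 = N := by lia
    simpa [reward_reached] using pow_mul_le_of_add_mul_le hY (N - (n + 1)) n
  · simp

theorem webserver_cdf_lfp_general (c : R) (N : ℕ) :
    IsLeast {Y : ℕ → R | ∀ n : ℕ, Y n = (if n + 1 = N then 1 else 0) + c * Y (n + 1)}
      (fun n : ℕ => (if n + 1 ≤ N then 1 else 0) * c ^ (N - (n + 1))) :=
  ⟨ite_mul_pow_eq_ite_add_mul c N,
    fun _ hY => ite_mul_pow_le_of_ite_add_mul_le fun n => (hY n).ge⟩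

end DiscountedReward

/-- CDF of the web-server runtime: for `N ≥ 1`, the least
function `Y : ℕ → ℝ≥0∞` (pointwise order) satisfying
`Y(n) = [n + 1 = N] + (1/2)·Y(n + 1)` is
`Y(n) = [n + 1 ≤ N]·(1/2)^{N − (n+1)}`; in particular `Y(0) = (1/2)^{N−1}`. -/
theorem webserver_cdf_lfp (N : ℕ) (hN : 1 ≤ N) :
    IsLeast {Y : ℕ → ℝ≥0∞ |
        ∀ n : ℕ, Y n = (if n + 1 = N then 1 else 0) + (1/2) * Y (n + 1)}
      (fun n : ℕ => (if n + 1 ≤ N then 1 else 0) * (1/2) ^ (N - (n + 1))) :=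
  webserver_cdf_lfp_general (1/2) N
end
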